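/- Let 0 < α ≤ 1 and 0 < β < 1. Then there exists a constant C > 0 (depending only on α and β) such that ∫₀^∞ (t + s)^{−1−α/2} (t + s/ε²)^{−β/2} ds ≤ C t^{−α/2−β/2} ε^{β} for all t > 0 and all 0 < ε ≤ 1. -/

import Mathlib

/-!
Dropping `t` from the second factor gives
`(t + s / ε²) ^ (-β/2) ≤ (s / ε²) ^ (-β/2) = ε ^ β * s ^ (-β/2)`. The majorant
`(t + s) ^ (-1 - α/2) * s ^ (-β/2)` is homogeneous, so rescaling `s = t u` pulls out
`t ^ (-α/2 - β/2)` and leaves `K = ∫₀^∞ (1 + u) ^ (-1 - α/2) * u ^ (-β/2) du`, which is finite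
because `β < 2` (at `0`) and `α > 0` (at `∞`). The constant is `C = K + 1`.
-/

open MeasureTheory

lemma integrableOn_one_add_rpow_mul_rpow {a b : ℝ} (ha : a < -1) (hb : -1 < b) (hb0 : b ≤ 0) :
    IntegrableOn (fun u : ℝ => (1 + u) ^ a * u ^ b) (Set.Ioi 0) := by
  have hmeas : Measurable (fun u : ℝ => (1 + u) ^ a * u ^ b) := by fun_prop
  rw [← Set.Ioc_union_Ioi_eq_Ioi (zero_le_one (α := ℝ))]
  refine IntegrableOn.union ?_ ?_
  · have h : IntegrableOn (fun u : ℝ => u ^ b) (Set.Ioc 0 1) :=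
      (intervalIntegrable_iff_integrableOn_Ioc_of_le zero_le_one).1
        (intervalIntegral.intervalIntegrable_rpow' hb)
    refine Integrable.mono' h hmeas.aestronglyMeasurable ?_
    filter_upwards [ae_restrict_mem measurableSet_Ioc] with u hu
    have hu0 : 0 < u := hu.1
    rw [Real.norm_of_nonneg (by positivity)]
    have : (1 + u) ^ a ≤ 1 := Real.rpow_le_one_of_one_le_of_nonpos (by linarith) (by linarith)
    exact mul_le_of_le_one_left (by positivity) this
  · refine Integrable.mono' (integrableOn_Ioi_rpow_of_lt ha zero_lt_one)
      hmeas.aestronglyMeasurable ?_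
    filter_upwards [ae_restrict_mem measurableSet_Ioi] with u hu
    have hu1 : 1 < u := hu
    have hu0 : 0 < u := by linarith
    rw [Real.norm_of_nonneg (by positivity)]
    have h1 : u ^ b ≤ 1 := Real.rpow_le_one_of_one_le_of_nonpos hu1.le hb0
    have h2 : (1 + u) ^ a ≤ u ^ a :=
      Real.rpow_le_rpow_of_nonpos hu0 (by linarith) (by linarith)
    exact (mul_le_of_le_one_right (by positivity) h1).trans h2

theorem integral_bound_one (α β : ℝ) (hα0 : 0 < α) (hα1 : α ≤ 1) (hβ0 : 0 < β) (hβ1 : β < 1) :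
    ∃ C : ℝ, 0 < C ∧ ∀ t ε : ℝ, 0 < t → 0 < ε → ε ≤ 1 →
      (∫ s in Set.Ioi (0 : ℝ),
          (t + s) ^ (-1 - α / 2 : ℝ) * (t + s / ε ^ 2) ^ (-(β / 2) : ℝ))
        ≤ C * t ^ (-(α / 2) - β / 2 : ℝ) * ε ^ β := by
  set h : ℝ → ℝ := fun u => (1 + u) ^ (-1 - α / 2) * u ^ (-(β / 2)) with hh
  have hint : IntegrableOn h (Set.Ioi 0) :=
    integrableOn_one_add_rpow_mul_rpow (by linarith) (by linarith) (by linarith)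
  have hK : 0 ≤ ∫ u in Set.Ioi 0, h u := by
    refine setIntegral_nonneg measurableSet_Ioi fun u hu => ?_
    have hu0 : 0 < u := hu
    simp only [hh]
    positivity
  refine ⟨(∫ u in Set.Ioi 0, h u) + 1, by linarith, fun t ε ht hε _ => ?_⟩
  have hti : 0 < t⁻¹ := inv_pos.2 ht
  -- The majorant, written as a rescaling of `h`.
  set c : ℝ := ε ^ β * (t ^ (-1 - α / 2) * t ^ (-(β / 2))) with hc
  have hGint : IntegrableOn (fun s => c * h (t⁻¹ * s)) (Set.Ioi 0) := by
    refine Integrable.const_mul ?_ c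
    have := (integrableOn_Ioi_comp_mul_left_iff h 0 hti).2 (by simpa using hint)
    exact this
  have hle : (∫ s in Set.Ioi (0 : ℝ),
      (t + s) ^ (-1 - α / 2 : ℝ) * (t + s / ε ^ 2) ^ (-(β / 2) : ℝ))
        ≤ ∫ s in Set.Ioi (0 : ℝ), c * h (t⁻¹ * s) := by
    refine integral_mono_of_nonneg ?_ hGint ?_
    · filter_upwards [ae_restrict_mem measurableSet_Ioi] with s hs
      have hs0 : 0 < s := hs
      simp only [Pi.zero_apply]
      positivity
    · filter_upwards [ae_restrict_mem measurableSet_Ioi] with s hs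
      have hs0 : 0 < s := hs
      have h1 : (t + s / ε ^ 2) ^ (-(β / 2)) ≤ (s / ε ^ 2) ^ (-(β / 2)) :=
        Real.rpow_le_rpow_of_nonpos (by positivity) (by linarith) (by linarith)
      have h2 : (s / ε ^ 2) ^ (-(β / 2)) = s ^ (-(β / 2)) * ε ^ β := by
        rw [Real.div_rpow hs0.le (by positivity), ← Real.rpow_natCast ε 2,
          ← Real.rpow_mul hε.le, div_eq_mul_inv, ← Real.rpow_neg hε.le]
        congr 2
        push_cast
        ring
      have h3 : (t + s) ^ (-1 - α / 2) = t ^ (-1 - α / 2) * (1 + t⁻¹ * s) ^ (-1 - α / 2) := by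
        rw [← Real.mul_rpow ht.le (by positivity)]
        congr 1
        field_simp
      have h4 : s ^ (-(β / 2)) = t ^ (-(β / 2)) * (t⁻¹ * s) ^ (-(β / 2)) := by
        rw [← Real.mul_rpow ht.le (by positivity)]
        congr 1
        field_simp
      calc (t + s) ^ (-1 - α / 2) * (t + s / ε ^ 2) ^ (-(β / 2))
          ≤ (t + s) ^ (-1 - α / 2) * (s ^ (-(β / 2)) * ε ^ β) := by
            rw [← h2]
            gcongr
        _ = c * h (t⁻¹ * s) := by
            rw [h3, h4, hc, hh]
            ring
  have hscale : t ^ (-1 - α / 2) * t ^ (-(β / 2)) * t = t ^ (-(α / 2) - β / 2) := by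
    nth_rewrite 3 [← Real.rpow_one t]
    rw [← Real.rpow_add ht, ← Real.rpow_add ht]
    congr 1
    ring
  have heq : ∫ s in Set.Ioi (0 : ℝ), c * h (t⁻¹ * s)
      = (∫ u in Set.Ioi 0, h u) * t ^ (-(α / 2) - β / 2) * ε ^ β := by
    rw [integral_const_mul, integral_comp_mul_left_Ioi h 0 hti, mul_zero, inv_inv, smul_eq_mul,
      ← hscale, hc]
    ring
  rw [heq] at hle
  refine hle.trans ?_
  gcongr
  linarith
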